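/- For every p with 2 ≤ p ≤ ∞ there exist a constant C and an integer L₀ ≥ 0, depending only on γ and p, such that for every integer j ≥ 1, every l ∈ ℕ with l ≥ L₀, every u ∈ [1,2], and every Schwartz function f on ℝ², ‖m_j^l(u,D) f‖_{L^p(ℝ²)} ≤ C 2^{−j/p} ‖f‖_{L^p(ℝ²)}; in particular the constant C is uniform in l and u. -/

import Mathlib

open MeasureTheory Set Filter ENNReal NNReal

/-- The rescaled curve `γ_l(t) = γ(2^{-l} t)/γ(2^{-l})`. -/
noncomputable def gammaZ (γ : ℝ → ℝ) (l : ℤ) (t : ℝ) : ℝ :=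
  γ ((2 : ℝ) ^ (-l) * t) / γ ((2 : ℝ) ^ (-l))

/-- The Fourier transform on `ℝ²`. -/
noncomputable def ft (f : ℝ × ℝ → ℂ) (ξ : ℝ × ℝ) : ℂ :=
  ∫ x : ℝ × ℝ, Complex.exp (-2 * Real.pi * Complex.I * (x.1 * ξ.1 + x.2 * ξ.2)) * f x

/-- The inverse Fourier transform on `ℝ²`. -/
noncomputable def ftInv (f : ℝ × ℝ → ℂ) (x : ℝ × ℝ) : ℂ :=
  ∫ ξ : ℝ × ℝ, Complex.exp (2 * Real.pi * Complex.I * (x.1 * ξ.1 + x.2 * ξ.2)) * f ξ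

/-- The Fourier multiplier operator `a(D)f = (a f̂)^∨` with symbol `a`. -/
noncomputable def op (a : ℝ × ℝ → ℂ) (f : ℝ × ℝ → ℂ) : ℝ × ℝ → ℂ :=
  ftInv (fun ξ => a ξ * ft f ξ)

/-- The localized multiplier `m_j^l(u,ξ)`. -/
noncomputable def mjl (γ φ : ℝ → ℝ) (j l : ℕ) (u : ℝ) (ξ : ℝ × ℝ) : ℂ :=
  ((φ ((2 : ℝ) ^ (-(j : ℤ)) * ξ.1) * φ ((2 : ℝ) ^ (-(j : ℤ)) * ξ.2) : ℝ) : ℂ) *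
    ∫ t : ℝ, Complex.exp (Complex.I * ξ.1 * t) *
      Complex.exp (Complex.I * ξ.2 * u * gammaZ γ (l : ℤ) t) * (φ t : ℂ) / t

section
open MeasureTheory Set Filter ENNReal NNReal
open scoped FourierTransform

abbrev E2 := WithLp 2 (ℝ × ℝ)

lemma ft_eq (f : ℝ × ℝ → ℂ) (w : E2) :
    ft f (WithLp.ofLp w) = 𝓕 (fun v : E2 => f (WithLp.ofLp v)) w := by
  rw [Real.fourier_eq', ft, ← (WithLp.volume_preserving_ofLp ℝ ℝ).integral_comp
    (MeasurableEquiv.toLp 2 (ℝ × ℝ)).symm.measurableEmbedding]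
  congr 1; ext v
  rw [smul_eq_mul]
  congr 2
  simp [WithLp.prod_inner_apply]
  ring

lemma ftInv_eq (f : ℝ × ℝ → ℂ) (w : E2) :
    ftInv f (WithLp.ofLp w) = 𝓕⁻ (fun v : E2 => f (WithLp.ofLp v)) w := by
  rw [Real.fourierInv_eq', ftInv, ← (WithLp.volume_preserving_ofLp ℝ ℝ).integral_comp
    (MeasurableEquiv.toLp 2 (ℝ × ℝ)).symm.measurableEmbedding]
  congr 1; ext v
  rw [smul_eq_mul]
  congr 2
  simp [WithLp.prod_inner_apply]
  ring

noncomputable def sE (f : SchwartzMap (ℝ × ℝ) ℂ) : SchwartzMap E2 ℂ :=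
  SchwartzMap.compCLMOfContinuousLinearEquiv ℂ (WithLp.prodContinuousLinearEquiv 2 ℝ ℝ ℝ) f

lemma sE_apply (f : SchwartzMap (ℝ × ℝ) ℂ) (w : E2) : sE f w = f (WithLp.ofLp w) := rfl

lemma ft_sE (f : SchwartzMap (ℝ × ℝ) ℂ) (w : E2) :
    ft f (WithLp.ofLp w) = (𝓕 (sE f)) w := by
  rw [ft_eq, SchwartzMap.fourier_coe]; rfl

/-- the Schwartz function `a f̂` -/
lemma exists_mul (a : ℝ × ℝ → ℂ) (ha : ContDiff ℝ (⊤ : ℕ∞) a) (hc : HasCompactSupport a)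
    (f : SchwartzMap (ℝ × ℝ) ℂ) :
    ∃ g : SchwartzMap E2 ℂ, ∀ w, g w = a (WithLp.ofLp w) * (𝓕 (sE f)) w := by
  have h1 : ContDiff ℝ (⊤ : ℕ∞) (fun w : E2 => a (WithLp.ofLp w) * (𝓕 (sE f)) w) := by
    refine ContDiff.mul ?_ (SchwartzMap.smooth _ _)
    exact ha.comp (WithLp.prodContinuousLinearEquiv 2 ℝ ℝ ℝ).contDiff
  have h2 : HasCompactSupport (fun w : E2 => a (WithLp.ofLp w) * (𝓕 (sE f)) w) := by
    apply HasCompactSupport.mul_right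
    exact hc.comp_homeomorph (WithLp.prodContinuousLinearEquiv 2 ℝ ℝ ℝ).toHomeomorph
  exact ⟨h2.toSchwartzMap h1, fun w => rfl⟩

lemma op_eq (a : ℝ × ℝ → ℂ) (ha : ContDiff ℝ (⊤ : ℕ∞) a) (hc : HasCompactSupport a)
    (f : SchwartzMap (ℝ × ℝ) ℂ) :
    ∃ g : SchwartzMap E2 ℂ, (∀ w, g w = a (WithLp.ofLp w) * (𝓕 (sE f)) w) ∧
      ∀ x : ℝ × ℝ, op a f x = (𝓕⁻ g) (WithLp.toLp 2 x) := by
  obtain ⟨g, hg⟩ := exists_mul a ha hc f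
  refine ⟨g, hg, fun x => ?_⟩
  rw [op, SchwartzMap.fourierInv_coe, show x = WithLp.ofLp (WithLp.toLp 2 x) from rfl, ftInv_eq]
  have : (fun v : E2 => a (WithLp.ofLp v) * ft f (WithLp.ofLp v)) = (g : E2 → ℂ) := by
    ext w
    rw [hg, ft_sE]
  rw [this]

lemma op_cont (a : ℝ × ℝ → ℂ) (ha : ContDiff ℝ (⊤ : ℕ∞) a) (hc : HasCompactSupport a)
    (f : SchwartzMap (ℝ × ℝ) ℂ) : Continuous (op a f) := by
  obtain ⟨g, hg, h⟩ := op_eq a ha hc f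
  rw [show op a f = fun x => (𝓕⁻ g) (WithLp.toLp 2 x) from funext h]
  exact (SchwartzMap.continuous _).comp (WithLp.prodContinuousLinearEquiv 2 ℝ ℝ ℝ).symm.continuous

lemma op_add (a : ℝ × ℝ → ℂ) (ha : ContDiff ℝ (⊤ : ℕ∞) a) (hc : HasCompactSupport a)
    (f₁ f₂ : SchwartzMap (ℝ × ℝ) ℂ) (x : ℝ × ℝ) :
    op a (f₁ + f₂ : SchwartzMap (ℝ × ℝ) ℂ) x = op a f₁ x + op a f₂ x := by
  obtain ⟨g, hg, h⟩ := op_eq a ha hc (f₁ + f₂)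
  obtain ⟨g1, hg1, h1⟩ := op_eq a ha hc f₁
  obtain ⟨g2, hg2, h2⟩ := op_eq a ha hc f₂
  have e : g = g1 + g2 := by
    ext w
    have : sE (f₁ + f₂) = sE f₁ + sE f₂ := map_add _ _ _
    rw [hg, this, FourierTransform.fourier_add]
    simp [hg1, hg2, mul_add]
  rw [h, h1, h2, e, FourierTransform.fourierInv_add]
  rfl

lemma plancherel (f : SchwartzMap E2 ℂ) : eLpNorm (𝓕 f : SchwartzMap E2 ℂ) 2 volume = eLpNorm f 2 volume := by
  have := SchwartzMap.norm_fourier_toL2_eq f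
  rw [SchwartzMap.norm_toLp, SchwartzMap.norm_toLp] at this
  exact (ENNReal.toReal_eq_toReal_iff' (SchwartzMap.eLpNorm_lt_top _ _ _).ne
    (SchwartzMap.eLpNorm_lt_top _ _ _).ne).1 this

lemma op_L2 (a : ℝ × ℝ → ℂ) (ha : ContDiff ℝ (⊤ : ℕ∞) a) (hc : HasCompactSupport a)
    (A : ℝ) (hA : ∀ ξ, ‖a ξ‖ ≤ A) (f : SchwartzMap (ℝ × ℝ) ℂ) :
    eLpNorm (op a f) 2 volume ≤ ENNReal.ofReal A * eLpNorm f 2 volume := by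
  obtain ⟨g, hg, h⟩ := op_eq a ha hc f
  have e1 : eLpNorm (op a f) 2 volume = eLpNorm g 2 volume := by
    rw [show op a f = (𝓕⁻ g : SchwartzMap E2 ℂ) ∘ (WithLp.toLp 2) from funext h,
      eLpNorm_comp_measurePreserving (SchwartzMap.continuous _).aestronglyMeasurable
        (WithLp.volume_preserving_toLp ℝ ℝ), ← plancherel, FourierTransform.fourier_fourierInv_eq]
  have e2 : eLpNorm f 2 volume = eLpNorm (𝓕 (sE f) : SchwartzMap E2 ℂ) 2 volume := by
    rw [plancherel, show (sE f : E2 → ℂ) = f ∘ WithLp.ofLp from rfl,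
      eLpNorm_comp_measurePreserving (SchwartzMap.continuous _).aestronglyMeasurable
        (WithLp.volume_preserving_ofLp ℝ ℝ)]
  rw [e1, e2]
  apply eLpNorm_le_mul_eLpNorm_of_ae_le_mul
  refine Eventually.of_forall fun w => ?_
  rw [hg, norm_mul]
  exact mul_le_mul_of_nonneg_right (hA _) (norm_nonneg _)

end

section
open MeasureTheory Set Filter ENNReal NNReal

lemma split_schwartz (f : SchwartzMap (ℝ × ℝ) ℂ) (h : ℝ) (hh : 0 < h) :
    ∃ f1 f2 : SchwartzMap (ℝ × ℝ) ℂ, f = f1 + f2 ∧ (∀ x, ‖f1 x‖ ≤ 2 * h) ∧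
      (∀ x, ‖f2 x‖ ≤ ‖f x‖) ∧ ∀ x, ‖f x‖ ≤ h → f2 x = 0 := by
  set F : ℝ × ℝ → ℂ := fun x => (Real.smoothTransition (‖f x‖ ^ 2 / h ^ 2 - 1)) • f x with hF
  have hz : ∀ x, ‖f x‖ ≤ h → F x = 0 := by
    intro x hx
    have : ‖f x‖ ^ 2 / h ^ 2 - 1 ≤ 0 := by
      rw [sub_nonpos, div_le_one (by positivity)]
      gcongr
    simp [hF, Real.smoothTransition.zero_of_nonpos this]
  have h1 : ContDiff ℝ (⊤ : ℕ∞) F := by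
    have hf := f.smooth ⊤
    have h0 : ContDiff ℝ (⊤ : ℕ∞) (fun x => Real.smoothTransition (‖f x‖ ^ 2 / h ^ 2 - 1)) := ?_
    · exact h0.smul hf
    refine Real.smoothTransition.contDiff.comp ?_
    exact ((hf.norm_sq ℝ).div_const _).sub contDiff_const
  have h2 : HasCompactSupport F := by
    rw [hasCompactSupport_iff_eventuallyEq, Filter.coclosedCompact_eq_cocompact]
    have := zero_at_infty f
    have h3 := this.norm
    rw [norm_zero] at h3
    filter_upwards [h3.eventually (gt_mem_nhds hh)] with x hx
    exact hz x hx.le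
  refine ⟨f - h2.toSchwartzMap h1, h2.toSchwartzMap h1, by simp, ?_, ?_, hz⟩
  · intro x
    change ‖f x - (Real.smoothTransition (‖f x‖ ^ 2 / h ^ 2 - 1)) • f x‖ ≤ 2 * h
    by_cases hx : 1 ≤ ‖f x‖ ^ 2 / h ^ 2 - 1
    · rw [Real.smoothTransition.one_of_one_le hx]
      simp; positivity
    · have e : f x - (Real.smoothTransition (‖f x‖ ^ 2 / h ^ 2 - 1)) • f x =
        (1 - Real.smoothTransition (‖f x‖ ^ 2 / h ^ 2 - 1)) • f x := by
        rw [sub_smul, one_smul]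
      rw [e, norm_smul, Real.norm_of_nonneg (by linarith [Real.smoothTransition.le_one (‖f x‖ ^ 2 / h ^ 2 - 1)])]
      have h5 : ‖f x‖ ≤ 2 * h := by
        apply le_of_sq_le_sq _ (by positivity)
        push Not at hx
        have : ‖f x‖ ^ 2 / h ^ 2 < 2 := by linarith
        rw [div_lt_iff₀ (by positivity)] at this
        nlinarith
      calc _ ≤ 1 * ‖f x‖ := by
            gcongr
            linarith [Real.smoothTransition.nonneg (‖f x‖ ^ 2 / h ^ 2 - 1)]
        _ ≤ _ := by linarith
  · intro x
    change ‖(Real.smoothTransition (‖f x‖ ^ 2 / h ^ 2 - 1)) • f x‖ ≤ _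
    rw [norm_smul, Real.norm_of_nonneg (Real.smoothTransition.nonneg _)]
    exact mul_le_of_le_one_left (norm_nonneg _) (Real.smoothTransition.le_one _)

lemma sq_of_eLp2 {F G : ℝ × ℝ → ℂ} {A : ℝ} (hA : 0 ≤ A)
    (h : eLpNorm F 2 volume ≤ ENNReal.ofReal A * eLpNorm G 2 volume) :
    ∫⁻ x, ENNReal.ofReal (‖F x‖ ^ 2) ≤ ENNReal.ofReal (A ^ 2) * ∫⁻ x, ENNReal.ofReal (‖G x‖ ^ 2) := by
  have key : ∀ F : ℝ × ℝ → ℂ, ∫⁻ x, ENNReal.ofReal (‖F x‖ ^ 2) = eLpNorm F 2 volume ^ 2 := by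
    intro F
    have := eLpNorm_nnreal_pow_eq_lintegral (f := F) (μ := volume) (p := 2) (by norm_num)
    norm_num at this
    rw [this]
    congr 1; ext x
    rw [ENNReal.ofReal_pow (norm_nonneg _), ofReal_norm]
  rw [key, key, ENNReal.ofReal_pow hA, ← mul_pow]
  gcongr

lemma marc (T : SchwartzMap (ℝ × ℝ) ℂ → ℝ × ℝ → ℂ)
    (hadd : ∀ f g x, T (f + g) x = T f x + T g x) (hcont : ∀ f, Continuous (T f))
    (A B : ℝ) (hA : 0 ≤ A) (hB : 0 < B)
    (h2 : ∀ f, eLpNorm (T f) 2 volume ≤ ENNReal.ofReal A * eLpNorm f 2 volume)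
    (hinf : ∀ f : SchwartzMap (ℝ × ℝ) ℂ, ∀ M : ℝ, (∀ᵐ z, ‖f z‖ ≤ M) → ∀ x, ‖T f x‖ ≤ B * M)
    (p : ℝ) (hp : 2 < p) (f : SchwartzMap (ℝ × ℝ) ℂ) :
    ∫⁻ x, ENNReal.ofReal (‖T f x‖ ^ p) ≤
      ENNReal.ofReal (4 * p / (p - 2) * A ^ 2 * (4 * B) ^ (p - 2)) *
        ∫⁻ x, ENNReal.ofReal (‖f x‖ ^ p) := by
  have hq : 0 < p - 2 := by linarith
  set ν : Measure (ℝ × ℝ) := volume.withDensity (fun x => ENNReal.ofReal (‖f x‖ ^ 2)) with hν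
  have hfm : Measurable (fun x => ‖f x‖) := f.continuous.norm.measurable
  have hwm : Measurable (fun x => ENNReal.ofReal (‖f x‖ ^ 2)) := (hfm.pow_const 2).ennreal_ofReal
  have step : ∀ s : ℝ, 0 < s → volume {x | s < ‖T f x‖} ≤
      ENNReal.ofReal (4 / s ^ 2 * A ^ 2) * ν {x | s < 4 * B * ‖f x‖} := by
    intro s hs
    obtain ⟨f1, f2, hf, hf1, hf2, hf3⟩ := split_schwartz f (s / (4 * B)) (by positivity)
    have hsub : {x | s < ‖T f x‖} ⊆ {x | ENNReal.ofReal ((s / 2) ^ 2) ≤ ENNReal.ofReal (‖T f2 x‖ ^ 2)} := by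
      intro x hx
      have h1 := hinf f1 _ (Eventually.of_forall hf1) x
      have e : B * (2 * (s / (4 * B))) = s / 2 := by field_simp; ring
      rw [e] at h1
      have h3 : ‖T f x‖ ≤ ‖T f1 x‖ + ‖T f2 x‖ := by
        rw [hf, hadd]; exact norm_add_le _ _
      simp only [Set.mem_ofPred_eq] at hx ⊢
      apply ENNReal.ofReal_le_ofReal
      gcongr
      linarith
    have cheb := mul_meas_ge_le_lintegral (μ := (volume : Measure (ℝ × ℝ)))
      (f := fun x => ENNReal.ofReal (‖T f2 x‖ ^ 2))
      (((hcont f2).norm.measurable.pow_const 2).ennreal_ofReal) (ENNReal.ofReal ((s / 2) ^ 2))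
    have l2 := sq_of_eLp2 hA (h2 f2)
    have l3 : ∫⁻ x, ENNReal.ofReal (‖f2 x‖ ^ 2) ≤ ν {x | s < 4 * B * ‖f x‖} := by
      have hm : MeasurableSet {x | s < 4 * B * ‖f x‖} :=
        measurableSet_lt measurable_const (hfm.const_mul _)
      rw [hν, withDensity_apply _ hm, ← lintegral_indicator hm]
      apply lintegral_mono
      intro x
      by_cases hx : s < 4 * B * ‖f x‖
      · rw [indicator_of_mem (by exact hx)]
        apply ENNReal.ofReal_le_ofReal
        gcongr
        exact hf2 x
      · beta_reduce
        rw [hf3 x (by rw [le_div_iff₀ (by positivity)]; linarith)]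
        simp
    have fin : ENNReal.ofReal ((s / 2) ^ 2) * volume {x | s < ‖T f x‖} ≤
        ENNReal.ofReal (A ^ 2) * ν {x | s < 4 * B * ‖f x‖} := by
      calc _ ≤ _ := mul_le_mul_right (measure_mono hsub) _
        _ ≤ _ := cheb
        _ ≤ _ := l2
        _ ≤ _ := mul_le_mul_right l3 _
    calc volume {x | s < ‖T f x‖}
        = ENNReal.ofReal (4 / s ^ 2) * (ENNReal.ofReal ((s / 2) ^ 2) * volume {x | s < ‖T f x‖}) := by
          rw [← mul_assoc, ← ENNReal.ofReal_mul (by positivity)]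
          rw [show 4 / s ^ 2 * (s / 2) ^ 2 = 1 by field_simp; norm_num]
          simp
      _ ≤ ENNReal.ofReal (4 / s ^ 2) * (ENNReal.ofReal (A ^ 2) * ν {x | s < 4 * B * ‖f x‖}) :=
          mul_le_mul_right fin _
      _ = _ := by rw [← mul_assoc, ← ENNReal.ofReal_mul (by positivity)]
  rw [lintegral_rpow_eq_lintegral_meas_lt_mul volume (Eventually.of_forall fun x => norm_nonneg _)
    (hcont f).norm.measurable.aemeasurable (by linarith : 0 < p)]
  have lc := lintegral_rpow_eq_lintegral_meas_lt_mul ν (f := fun x => 4 * B * ‖f x‖)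
    (Eventually.of_forall fun x => by positivity)
    (hfm.const_mul _).aemeasurable hq
  have e1 : ∫⁻ x, ENNReal.ofReal ((4 * B * ‖f x‖) ^ (p - 2)) ∂ν =
      ENNReal.ofReal ((4 * B) ^ (p - 2)) * ∫⁻ x, ENNReal.ofReal (‖f x‖ ^ p) := by
    rw [hν, lintegral_withDensity_eq_lintegral_mul _ hwm (by fun_prop), ← lintegral_const_mul _ (by fun_prop)]
    congr 1; ext x
    simp only [Pi.mul_apply]
    rw [← ENNReal.ofReal_mul (by positivity), ← ENNReal.ofReal_mul (by positivity)]
    congr 1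
    rw [Real.mul_rpow (by positivity) (by positivity)]
    have : ‖f x‖ ^ p = ‖f x‖ ^ 2 * ‖f x‖ ^ (p - 2) := by
      rw [← Real.rpow_natCast, ← Real.rpow_add_of_nonneg (norm_nonneg _) (by norm_num) hq.le]
      congr 1; push_cast; ring
    rw [this]; ring
  have e2 : ∫⁻ t in Ioi 0, volume {x | t < ‖T f x‖} * ENNReal.ofReal (t ^ (p - 1)) ≤
      ENNReal.ofReal (4 * A ^ 2) * ∫⁻ t in Ioi 0, ν {x | t < 4 * B * ‖f x‖} * ENNReal.ofReal (t ^ (p - 2 - 1)) := by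
    rw [← lintegral_const_mul' _ _ ENNReal.ofReal_ne_top]
    apply setLIntegral_mono' measurableSet_Ioi
    intro t ht
    have ht : 0 < t := ht
    calc _ ≤ (ENNReal.ofReal (4 / t ^ 2 * A ^ 2) * ν {x | t < 4 * B * ‖f x‖}) * ENNReal.ofReal (t ^ (p - 1)) :=
          mul_le_mul_left (step t ht) _
      _ = ENNReal.ofReal (4 / t ^ 2 * A ^ 2) * ENNReal.ofReal (t ^ (p - 1)) * ν {x | t < 4 * B * ‖f x‖} := by ring
      _ = ENNReal.ofReal (4 * A ^ 2) * ENNReal.ofReal (t ^ (p - 2 - 1)) * ν {x | t < 4 * B * ‖f x‖} := by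
          rw [← ENNReal.ofReal_mul (by positivity), ← ENNReal.ofReal_mul (by positivity)]
          congr 2
          rw [show p - 1 = (p - 2 - 1) + (2 : ℕ) by push_cast; ring, Real.rpow_add_natCast ht.ne']
          field_simp
      _ ≤ _ := le_of_eq (by ring)
  have e3 : ∫⁻ t in Ioi 0, ν {x | t < 4 * B * ‖f x‖} * ENNReal.ofReal (t ^ (p - 2 - 1)) =
      ENNReal.ofReal (1 / (p - 2)) * (ENNReal.ofReal ((4 * B) ^ (p - 2)) * ∫⁻ x, ENNReal.ofReal (‖f x‖ ^ p)) := by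
    rw [← e1, lc, ← mul_assoc, ← ENNReal.ofReal_mul (by positivity), one_div_mul_cancel hq.ne']
    simp
  calc _ ≤ ENNReal.ofReal p * _ := mul_le_mul_right e2 _
    _ = _ := by
      rw [e3, ← mul_assoc, ← mul_assoc, ← mul_assoc, ← ENNReal.ofReal_mul (by positivity),
        ← ENNReal.ofReal_mul (by positivity), ← ENNReal.ofReal_mul (by positivity)]
      congr 2
      ring

end

section
open MeasureTheory Set Filter ENNReal NNReal
open scoped FourierTransform

noncomputable def PhiI (g : ℝ → ℂ) (θ : ℝ → ℝ) (ξ : ℝ × ℝ) : ℂ :=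
  ∫ t : ℝ, Complex.exp (Complex.I * (ξ.1 * t + ξ.2 * θ t)) * g t

lemma Phi_smooth (g : ℝ → ℂ) (θ : ℝ → ℝ) (hg : Continuous g) (hgc : HasCompactSupport g)
    (hθ : Continuous θ) : ContDiff ℝ (⊤ : ℕ∞) (PhiI g θ) := by
  set L : (ℝ × ℝ) →L[ℝ] (ℝ × ℝ) →L[ℝ] ℝ := (-(1 / (2 * Real.pi))) •
    ((ContinuousLinearMap.mul ℝ ℝ).bilinearComp (ContinuousLinearMap.fst ℝ ℝ ℝ) (ContinuousLinearMap.fst ℝ ℝ ℝ)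
      + (ContinuousLinearMap.mul ℝ ℝ).bilinearComp (ContinuousLinearMap.snd ℝ ℝ ℝ) (ContinuousLinearMap.snd ℝ ℝ ℝ)) with hL
  have hm : Measurable (fun t : ℝ => (t, θ t)) := (continuous_id.prodMk hθ).measurable
  have key := VectorFourier.contDiff_fourierIntegral L (N := ⊤) (f := fun v : ℝ × ℝ => g v.1)
    (μ := (volume : Measure ℝ).map (fun t : ℝ => (t, θ t))) (by
      intro n _
      rw [integrable_map_measure (by fun_prop) hm.aemeasurable]
      apply Continuous.integrable_of_hasCompactSupport
      · simp only [Function.comp_def]; fun_prop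
      · apply HasCompactSupport.mul_left
        exact hgc.norm)
  convert! key using 1
  ext ξ
  rw [VectorFourier.fourierIntegral, integral_map hm.aemeasurable (by
    apply Continuous.aestronglyMeasurable
    simp only [Circle.smul_def, hL, Real.fourierChar_apply]
    simp
    fun_prop)]
  rw [PhiI]
  congr 1; ext t
  rw [Circle.smul_def, Real.fourierChar_apply, smul_eq_mul]
  congr 2
  simp [hL]
  field_simp
  ring

lemma ft_cont (f : SchwartzMap (ℝ × ℝ) ℂ) : Continuous (ft f) := by
  have : ft f = fun x => (𝓕 (sE f) : SchwartzMap E2 ℂ) (WithLp.toLp 2 x) := by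
    ext x; rw [← ft_sE]
  rw [this]
  exact (SchwartzMap.continuous _).comp (WithLp.prodContinuousLinearEquiv 2 ℝ ℝ ℝ).symm.continuous

lemma norm_exp_I (r : ℝ) : ‖Complex.exp (Complex.I * r)‖ = 1 := by
  rw [mul_comm, Complex.norm_exp_ofReal_mul_I]

lemma op_Phi (a : ℝ × ℝ → ℂ) (ha : Continuous a) (hc : HasCompactSupport a)
    (g : ℝ → ℂ) (θ : ℝ → ℝ) (hg : Continuous g) (hgc : HasCompactSupport g)
    (hθ : Continuous θ) (f : SchwartzMap (ℝ × ℝ) ℂ) (x : ℝ × ℝ) :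
    op (fun ξ => a ξ * PhiI g θ ξ) f x =
      ∫ t, g t * op a f (x.1 + t / (2 * Real.pi), x.2 + θ t / (2 * Real.pi)) := by
  have hH : Integrable (fun ξ => a ξ * ft f ξ) :=
    (ha.mul (ft_cont f)).integrable_of_hasCompactSupport hc.mul_right
  have hG : Integrable g := hg.integrable_of_hasCompactSupport hgc
  have hft := ft_cont f
  unfold op ftInv PhiI
  calc _ = ∫ ξ : ℝ × ℝ, ∫ t, Complex.exp (2 * Real.pi * Complex.I * (x.1 * ξ.1 + x.2 * ξ.2)) *
        (Complex.exp (Complex.I * (ξ.1 * t + ξ.2 * θ t))) * ((a ξ * ft f ξ) * g t) := by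
        congr 1; ext ξ
        beta_reduce
        rw [← integral_const_mul, ← integral_mul_const, ← integral_const_mul]
        congr 1; ext t; ring
    _ = ∫ t, ∫ ξ : ℝ × ℝ, Complex.exp (2 * Real.pi * Complex.I * (x.1 * ξ.1 + x.2 * ξ.2)) *
        (Complex.exp (Complex.I * (ξ.1 * t + ξ.2 * θ t))) * ((a ξ * ft f ξ) * g t) := by
        apply integral_integral_swap
        refine Integrable.mono (hH.mul_prod hG) ?_ (Eventually.of_forall ?_)
        · apply Continuous.aestronglyMeasurable
          simp only [Function.uncurry_def]
          fun_prop
        · rintro ⟨ξ, t⟩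
          simp only [Function.uncurry_def]
          rw [norm_mul, norm_mul]
          have h1 := norm_exp_I (2 * Real.pi * (x.1 * ξ.1 + x.2 * ξ.2))
          have h2 := norm_exp_I (ξ.1 * t + ξ.2 * θ t)
          push_cast at h1 h2
          rw [h2, show 2 * (Real.pi : ℂ) * Complex.I * (x.1 * ξ.1 + x.2 * ξ.2) =
            Complex.I * (2 * Real.pi * (x.1 * ξ.1 + x.2 * ξ.2)) by ring, h1]
          simp
    _ = _ := by
        congr 1; ext t
        rw [← integral_const_mul]
        congr 1; ext ξ
        rw [← Complex.exp_add]
        have : (Real.pi : ℂ) ≠ 0 := by exact_mod_cast Real.pi_ne_zero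
        rw [show (2 * (Real.pi : ℂ) * Complex.I * (x.1 * ξ.1 + x.2 * ξ.2) +
          Complex.I * (ξ.1 * t + ξ.2 * θ t)) = 2 * Real.pi * Complex.I *
          ((x.1 + t / (2 * Real.pi) : ℝ) * ξ.1 + (x.2 + θ t / (2 * Real.pi) : ℝ) * ξ.2) by
            push_cast; field_simp; ring]
        ring

lemma op_conv (a : ℝ × ℝ → ℂ) (ha : Continuous a) (hc : HasCompactSupport a)
    (f : SchwartzMap (ℝ × ℝ) ℂ) (y : ℝ × ℝ) :
    op a f y = ∫ z, f z * ftInv a (y - z) := by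
  have hA : Integrable a := ha.integrable_of_hasCompactSupport hc
  have hF : Integrable f := f.integrable
  have hfc := f.continuous
  unfold op ftInv ft
  calc _ = ∫ ξ : ℝ × ℝ, ∫ z : ℝ × ℝ, Complex.exp (2 * Real.pi * Complex.I * (y.1 * ξ.1 + y.2 * ξ.2)) *
        Complex.exp (-2 * Real.pi * Complex.I * (z.1 * ξ.1 + z.2 * ξ.2)) * (a ξ * f z) := by
        congr 1; ext ξ
        beta_reduce
        rw [← integral_const_mul, ← integral_const_mul]
        congr 1; ext t; ring
    _ = ∫ z : ℝ × ℝ, ∫ ξ : ℝ × ℝ, Complex.exp (2 * Real.pi * Complex.I * (y.1 * ξ.1 + y.2 * ξ.2)) *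
        Complex.exp (-2 * Real.pi * Complex.I * (z.1 * ξ.1 + z.2 * ξ.2)) * (a ξ * f z) := by
        apply integral_integral_swap
        refine Integrable.mono (hA.mul_prod hF) ?_ (Eventually.of_forall ?_)
        · apply Continuous.aestronglyMeasurable
          simp only [Function.uncurry_def]
          fun_prop
        · rintro ⟨ξ, z⟩
          simp only [Function.uncurry_def]
          rw [norm_mul, norm_mul]
          have h1 := norm_exp_I (2 * Real.pi * (y.1 * ξ.1 + y.2 * ξ.2))
          have h2 := norm_exp_I (-2 * Real.pi * (z.1 * ξ.1 + z.2 * ξ.2))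
          push_cast at h1 h2
          rw [show 2 * (Real.pi : ℂ) * Complex.I * (y.1 * ξ.1 + y.2 * ξ.2) =
            Complex.I * (2 * Real.pi * (y.1 * ξ.1 + y.2 * ξ.2)) by ring, h1,
            show -2 * (Real.pi : ℂ) * Complex.I * (z.1 * ξ.1 + z.2 * ξ.2) =
            Complex.I * (-2 * Real.pi * (z.1 * ξ.1 + z.2 * ξ.2)) by ring, h2]
          simp
    _ = _ := by
        congr 1; ext z
        rw [← integral_const_mul]
        congr 1; ext ξ
        rw [← Complex.exp_add]
        rw [show (2 * (Real.pi : ℂ) * Complex.I * (y.1 * ξ.1 + y.2 * ξ.2) +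
          -2 * Real.pi * Complex.I * (z.1 * ξ.1 + z.2 * ξ.2)) = 2 * Real.pi * Complex.I *
          ((y - z).1 * ξ.1 + (y - z).2 * ξ.2) by
            simp; ring]
        ring

lemma ftInv_tensor (φ : ℝ → ℝ) (c : ℝ) (hc : 0 < c) (w : ℝ × ℝ) :
    ftInv (fun ξ => ((φ (c * ξ.1) * φ (c * ξ.2) : ℝ) : ℂ)) w =
      (c⁻¹ * (𝓕⁻ (fun r => (φ r : ℂ))) (c⁻¹ * w.1)) * (c⁻¹ * (𝓕⁻ (fun r => (φ r : ℂ))) (c⁻¹ * w.2)) := by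
  have key : ∀ s : ℝ, (c⁻¹ * (𝓕⁻ (fun r => (φ r : ℂ))) (c⁻¹ * s)) =
      ∫ r : ℝ, Complex.exp (2 * Real.pi * Complex.I * (s * r)) * φ (c * r) := by
    intro s
    rw [Real.fourierInv_eq']
    have := Measure.integral_comp_mul_left (fun r : ℝ => Complex.exp (2 * Real.pi * Complex.I * (s * (c⁻¹ * r))) * φ r) c
    rw [abs_of_pos (by positivity), Complex.real_smul] at this
    push_cast at this
    have hc' : (c : ℂ) ≠ 0 := by exact_mod_cast hc.ne'
    rw [show (∫ r : ℝ, Complex.exp (2 * Real.pi * Complex.I * (s * r)) * φ (c * r)) = 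
      ∫ x : ℝ, Complex.exp (2 * Real.pi * Complex.I * (s * ((c : ℂ)⁻¹ * (c * x)))) * φ (c * x) from by
        congr 1; ext r; congr 3; field_simp]
    rw [this, Complex.ofReal_inv]
    congr 2; ext r
    rw [smul_eq_mul]
    congr 2
    simp; ring
  rw [key, key, ← integral_prod_mul, ftInv]
  congr 1; ext ξ
  rw [show 2 * (Real.pi : ℂ) * Complex.I * (w.1 * ξ.1 + w.2 * ξ.2) =
    2 * Real.pi * Complex.I * (w.1 * ξ.1) + 2 * Real.pi * Complex.I * (w.2 * ξ.2) by ring, Complex.exp_add]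
  push_cast
  ring

/-- `L^1` norm of kernel of the projection -/
noncomputable def kN (φ : ℝ → ℝ) : ℝ := ∫ r, ‖(𝓕⁻ (fun r => (φ r : ℂ))) r‖

lemma kern_L1 (φ : ℝ → ℝ) (hφs : ContDiff ℝ (⊤ : ℕ∞) φ) (hφc : HasCompactSupport φ)
    (c : ℝ) (hc : 0 < c) :
    Integrable (ftInv (fun ξ => ((φ (c * ξ.1) * φ (c * ξ.2) : ℝ) : ℂ))) ∧
    ∫ w, ‖ftInv (fun ξ => ((φ (c * ξ.1) * φ (c * ξ.2) : ℝ) : ℂ)) w‖ = kN φ ^ 2 := by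
  have hi : Integrable (𝓕⁻ (fun r => (φ r : ℂ))) := by
    have h1 : ContDiff ℝ (⊤ : ℕ∞) (fun r => (φ r : ℂ)) := Complex.ofRealCLM.contDiff.comp hφs
    have h2 : HasCompactSupport (fun r => (φ r : ℂ)) := hφc.comp_left Complex.ofReal_zero
    have := (𝓕⁻ (h2.toSchwartzMap h1)).integrable (μ := volume)
    rw [SchwartzMap.fourierInv_coe] at this
    exact this
  have hi2 : Integrable (fun s : ℝ => (c⁻¹ * (𝓕⁻ (fun r => (φ r : ℂ))) (c⁻¹ * s) : ℂ)) :=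
    (hi.comp_mul_left' (by positivity)).const_mul _
  have e := funext (ftInv_tensor φ c hc)
  have e1 : ∫ s : ℝ, ‖(c⁻¹ * (𝓕⁻ (fun r => (φ r : ℂ))) (c⁻¹ * s) : ℂ)‖ = kN φ := by
    simp only [norm_mul]
    rw [integral_const_mul, Measure.integral_comp_mul_left (fun r => ‖(𝓕⁻ (fun r => (φ r : ℂ)) : ℝ → ℂ) r‖)]
    rw [abs_of_pos (by positivity), kN]
    simp [abs_of_pos hc]
    field_simp
  rw [e]
  refine ⟨hi2.mul_prod hi2, ?_⟩
  simp only [norm_mul] at e1 ⊢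
  rw [sq, ← e1, Measure.volume_eq_prod, ← integral_prod_mul]

lemma op_Linf (φ : ℝ → ℝ) (hφs : ContDiff ℝ (⊤ : ℕ∞) φ) (hφc : HasCompactSupport φ)
    (c : ℝ) (hc : 0 < c) 
    (hcs : HasCompactSupport (fun ξ : ℝ × ℝ => ((φ (c * ξ.1) * φ (c * ξ.2) : ℝ) : ℂ)))
    (g : ℝ → ℂ) (θ : ℝ → ℝ) (hg : Continuous g) (hgc : HasCompactSupport g)
    (hθ : Continuous θ) (f : SchwartzMap (ℝ × ℝ) ℂ) (M : ℝ) (hM : ∀ᵐ z, ‖f z‖ ≤ M) (x : ℝ × ℝ) :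
    ‖op (fun ξ => ((φ (c * ξ.1) * φ (c * ξ.2) : ℝ) : ℂ) * PhiI g θ ξ) f x‖ ≤
      ((∫ t, ‖g t‖) * kN φ ^ 2) * M := by
  have hφ := hφs.continuous
  have hac : Continuous (fun ξ : ℝ × ℝ => ((φ (c * ξ.1) * φ (c * ξ.2) : ℝ) : ℂ)) := by fun_prop
  obtain ⟨k1, k2⟩ := kern_L1 φ hφs hφc c hc
  have hp : ∀ y, ‖op (fun ξ => ((φ (c * ξ.1) * φ (c * ξ.2) : ℝ) : ℂ)) f y‖ ≤ kN φ ^ 2 * M := by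
    intro y
    rw [op_conv _ hac hcs]
    have k3 := k1.norm.comp_sub_left y
    calc _ ≤ ∫ z, M * ‖ftInv (fun ξ : ℝ × ℝ => ((φ (c * ξ.1) * φ (c * ξ.2) : ℝ) : ℂ)) (y - z)‖ := by
          apply norm_integral_le_of_norm_le (k3.const_mul M)
          filter_upwards [hM] with z hz
          rw [norm_mul]
          gcongr
      _ = _ := by
          rw [integral_const_mul, integral_sub_left_eq_self (fun w => ‖ftInv (fun ξ : ℝ × ℝ => ((φ (c * ξ.1) * φ (c * ξ.2) : ℝ) : ℂ)) w‖), k2]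
          ring
  rw [op_Phi _ hac hcs g θ hg hgc hθ]
  calc _ ≤ ∫ t, ‖g t‖ * (kN φ ^ 2 * M) := by
        apply norm_integral_le_of_norm_le ((hg.integrable_of_hasCompactSupport hgc).norm.mul_const _)
        refine Eventually.of_forall fun t => ?_
        rw [norm_mul]
        gcongr
        exact hp _
    _ = _ := by rw [integral_mul_const]; ring

end

section
open MeasureTheory Set Filter ENNReal NNReal

lemma vdc_pos (a b : ℝ) (hab : a ≤ b) (ψ ψ1 ψ2 g g1 : ℝ → ℝ) (μ G G1 : ℝ) (hμ : 0 < μ)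
    (h1 : ∀ t ∈ Icc a b, HasDerivAt ψ (ψ1 t) t) (h2 : ∀ t ∈ Icc a b, HasDerivAt ψ1 (ψ2 t) t)
    (hc : ContinuousOn ψ2 (Icc a b)) (hlow : ∀ t ∈ Icc a b, μ ^ 2 ≤ ψ2 t)
    (hg : ∀ t ∈ Icc a b, HasDerivAt g (g1 t) t) (hg1 : ContinuousOn g1 (Icc a b))
    (hG : ∀ t ∈ Icc a b, |g t| ≤ G) (hG1 : ∀ t ∈ Icc a b, |g1 t| ≤ G1) :
    ‖∫ t in a..b, Complex.exp (Complex.I * ψ t) * g t‖ ≤ (G + G1 * (b - a) / 2 + 2 * Real.pi * G) / μ := by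
  have hG0 : 0 ≤ G := (abs_nonneg _).trans (hG a ⟨le_rfl, hab⟩)
  have hu : uIcc a b = Icc a b := uIcc_of_le hab
  set h : ℝ → ℝ := fun t => ψ1 t / (ψ1 t ^ 2 + μ ^ 2) with hh
  set h' : ℝ → ℝ := fun t => (ψ2 t * (ψ1 t ^ 2 + μ ^ 2) - ψ1 t * (2 * ψ1 t * ψ2 t)) / (ψ1 t ^ 2 + μ ^ 2) ^ 2 with hh'
  have hden : ∀ t, 0 < ψ1 t ^ 2 + μ ^ 2 := fun t => by positivity
  have hhd : ∀ t ∈ Icc a b, HasDerivAt h (h' t) t := by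
    intro t ht
    have := (h2 t ht).div (((h2 t ht).pow 2).add_const (μ ^ 2)) (hden t).ne'
    convert! this using 1
    simp [hh']
  have cψ : ContinuousOn ψ (Icc a b) := fun t ht => (h1 t ht).continuousAt.continuousWithinAt
  have cψ1 : ContinuousOn ψ1 (Icc a b) := fun t ht => (h2 t ht).continuousAt.continuousWithinAt
  have cg : ContinuousOn g (Icc a b) := fun t ht => (hg t ht).continuousAt.continuousWithinAt
  have ch : ContinuousOn h (Icc a b) := fun t ht => (hhd t ht).continuousAt.continuousWithinAt
  have ch' : ContinuousOn h' (Icc a b) := by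
    apply ContinuousOn.div (by fun_prop) (by fun_prop)
    intro t _; exact (pow_pos (hden t) 2).ne'
  set D : ℝ → ℂ := fun t => (g t * h t : ℝ) * Complex.exp (Complex.I * ψ t) with hD
  set D' : ℝ → ℂ := fun t => (g1 t * h t + g t * h' t : ℝ) * Complex.exp (Complex.I * ψ t)
    + (g t * h t : ℝ) * (Complex.exp (Complex.I * ψ t) * (Complex.I * ψ1 t)) with hD'
  have hDd : ∀ t ∈ Icc a b, HasDerivAt D (D' t) t := by
    intro t ht
    exact (((hg t ht).mul (hhd t ht)).ofReal_comp).mul (((h1 t ht).ofReal_comp.const_mul Complex.I).cexp)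
  have cexpc : ContinuousOn (fun t => Complex.exp (Complex.I * ψ t)) (Icc a b) := by fun_prop
  have cD' : ContinuousOn D' (Icc a b) := by
    simp only [hD']; fun_prop
  have ftc : ∫ t in a..b, D' t = D b - D a :=
    intervalIntegral.integral_eq_sub_of_hasDerivAt (fun t ht => hDd t (hu ▸ ht))
      (ContinuousOn.intervalIntegrable (hu ▸ cD'))
  have cF : ContinuousOn (fun t => Complex.exp (Complex.I * ψ t) * g t) (Icc a b) := by fun_prop
  have iF : IntervalIntegrable (fun t => Complex.exp (Complex.I * ψ t) * g t) volume a b :=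
    ContinuousOn.intervalIntegrable (hu ▸ cF)
  have iD : IntervalIntegrable D' volume a b := ContinuousOn.intervalIntegrable (hu ▸ cD')
  have habs : ∀ t, |h t| ≤ 1 / (2 * μ) := by
    intro t
    rw [hh]; simp only [abs_div, abs_of_pos (hden t)]
    rw [div_le_div_iff₀ (hden t) (by positivity)]
    nlinarith [sq_nonneg (|ψ1 t| - μ), sq_abs (ψ1 t)]
  set Q : ℝ → ℝ := fun t => G1 / (2 * μ) * t + 2 * G / μ * Real.arctan (ψ1 t / μ) with hQ
  set Q' : ℝ → ℝ := fun t => G1 / (2 * μ) + 2 * G * (ψ2 t / (ψ1 t ^ 2 + μ ^ 2)) with hQ'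
  have hQd : ∀ t ∈ Icc a b, HasDerivAt Q (Q' t) t := by
    intro t ht
    have := ((hasDerivAt_id t).const_mul (G1 / (2 * μ))).add
      ((((h2 t ht).div_const μ).arctan).const_mul (2 * G / μ))
    convert! this using 1
    have := hden t
    simp only [hQ']
    field_simp
    ring
  have cQ' : ContinuousOn Q' (Icc a b) := by
    simp only [hQ']
    refine continuousOn_const.add (continuousOn_const.mul (hc.div (by fun_prop) ?_))
    intro t _; exact (hden t).ne'
  have ftcQ : ∫ t in a..b, Q' t = Q b - Q a :=
    intervalIntegral.integral_eq_sub_of_hasDerivAt (fun t ht => hQd t (hu ▸ ht))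
      (ContinuousOn.intervalIntegrable (hu ▸ cQ'))
  have hR : ∀ t ∈ Icc a b, ‖Complex.exp (Complex.I * ψ t) * g t + Complex.I * D' t‖ ≤ Q' t := by
    intro t ht
    have hd := hden t
    have e : Complex.exp (Complex.I * ψ t) * g t + Complex.I * D' t =
        Complex.exp (Complex.I * ψ t) * ((g t * (μ ^ 2 / (ψ1 t ^ 2 + μ ^ 2)) : ℝ) +
          Complex.I * (g1 t * h t + g t * h' t : ℝ)) := by
      have e0 : g t - g t * h t * ψ1 t = g t * (μ ^ 2 / (ψ1 t ^ 2 + μ ^ 2)) := by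
        simp only [hh]; field_simp; ring
      rw [← e0]
      simp only [hD']
      push_cast
      linear_combination (g t * h t * ψ1 t * Complex.exp (Complex.I * ψ t) : ℂ) * Complex.I_sq
    rw [e, norm_mul, norm_exp_I, one_mul]
    refine (norm_add_le _ _).trans ?_
    rw [norm_mul, Complex.norm_I, one_mul, Complex.norm_real, Complex.norm_real, Real.norm_eq_abs, Real.norm_eq_abs]
    have hl := hlow t ht
    have hψ2 : 0 < ψ2 t := lt_of_lt_of_le (by positivity) hl
    have b1 : |g t * (μ ^ 2 / (ψ1 t ^ 2 + μ ^ 2))| ≤ G * (ψ2 t / (ψ1 t ^ 2 + μ ^ 2)) := by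
      rw [abs_mul, abs_of_nonneg (by positivity : 0 ≤ μ ^ 2 / (ψ1 t ^ 2 + μ ^ 2))]
      have := hG t ht
      gcongr
    have b2 : |g1 t * h t| ≤ G1 / (2 * μ) := by
      rw [abs_mul, div_eq_mul_one_div]
      exact mul_le_mul (hG1 t ht) (habs t) (abs_nonneg _) ((abs_nonneg _).trans (hG1 t ht))
    have b3 : |g t * h' t| ≤ G * (ψ2 t / (ψ1 t ^ 2 + μ ^ 2)) := by
      rw [abs_mul]
      refine mul_le_mul (hG t ht) ?_ (abs_nonneg _) hG0
      simp only [hh']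
      rw [abs_div, abs_of_pos (pow_pos hd 2), div_le_div_iff₀ (pow_pos hd 2) hd]
      have : |ψ2 t * (ψ1 t ^ 2 + μ ^ 2) - ψ1 t * (2 * ψ1 t * ψ2 t)| ≤ ψ2 t * (ψ1 t ^ 2 + μ ^ 2) := by
        rw [abs_le]; constructor
        · have : 0 ≤ ψ2 t * μ ^ 2 := by positivity
          nlinarith
        · have : 0 ≤ ψ2 t * ψ1 t ^ 2 := by positivity
          nlinarith
      calc _ ≤ ψ2 t * (ψ1 t ^ 2 + μ ^ 2) * (ψ1 t ^ 2 + μ ^ 2) := by gcongr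
        _ = _ := by ring
    have b4 := abs_add_le (g1 t * h t) (g t * h' t)
    simp only [hQ']
    linarith
  have main : ‖∫ t in a..b, (Complex.exp (Complex.I * ψ t) * g t + Complex.I * D' t)‖ ≤ ∫ t in a..b, Q' t := by
    apply intervalIntegral.norm_integral_le_of_norm_le hab
    · refine Eventually.of_forall fun t ht => hR t (Ioc_subset_Icc_self ht)
    · exact ContinuousOn.intervalIntegrable (hu ▸ cQ')
  rw [intervalIntegral.integral_add iF (iD.const_mul _), intervalIntegral.integral_const_mul, ftc, ftcQ] at main
  have hDb : ∀ t ∈ Icc a b, ‖D t‖ ≤ G * (1 / (2 * μ)) := by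
    intro t ht
    simp only [hD]
    rw [norm_mul, norm_exp_I, mul_one, Complex.norm_real, Real.norm_eq_abs, abs_mul]
    exact mul_le_mul (hG t ht) (habs t) (abs_nonneg _) hG0
  have hDb1 := hDb a ⟨le_rfl, hab⟩
  have hDb2 := hDb b ⟨hab, le_rfl⟩
  have n1 : ‖Complex.I * (D b - D a)‖ ≤ G / μ := by
    rw [norm_mul, Complex.norm_I, one_mul]
    refine (norm_sub_le _ _).trans ?_
    have : G / μ = G * (1 / (2 * μ)) + G * (1 / (2 * μ)) := by field_simp; ring
    linarith
  have n2 : Q b - Q a ≤ (G1 * (b - a) / 2 + 2 * Real.pi * G) / μ := by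
    have p1 := Real.arctan_lt_pi_div_two (ψ1 b / μ)
    have p2 := Real.neg_pi_div_two_lt_arctan (ψ1 a / μ)
    have : Q b - Q a = (G1 * (b - a) / 2 + 2 * G * (Real.arctan (ψ1 b / μ) - Real.arctan (ψ1 a / μ))) / μ := by
      simp only [hQ]; field_simp; ring
    rw [this]
    have : 2 * G * (Real.arctan (ψ1 b / μ) - Real.arctan (ψ1 a / μ)) ≤ 2 * G * Real.pi := by
      gcongr; linarith
    apply div_le_div_of_nonneg_right _ hμ.le
    linarith
  have tri : ∀ X Y : ℂ, ‖X‖ ≤ ‖X + Y‖ + ‖Y‖ := fun X Y => by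
    simpa using norm_sub_le (X + Y) Y
  refine (tri _ (Complex.I * (D b - D a))).trans ?_
  have : (G + G1 * (b - a) / 2 + 2 * Real.pi * G) / μ = G / μ + (G1 * (b - a) / 2 + 2 * Real.pi * G) / μ := by ring
  linarith

lemma vdc (a b : ℝ) (hab : a ≤ b) (ψ ψ1 ψ2 g g1 : ℝ → ℝ) (μ G G1 : ℝ) (hμ : 0 < μ)
    (h1 : ∀ t ∈ Icc a b, HasDerivAt ψ (ψ1 t) t) (h2 : ∀ t ∈ Icc a b, HasDerivAt ψ1 (ψ2 t) t)
    (hc : ContinuousOn ψ2 (Icc a b))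
    (hlow : (∀ t ∈ Icc a b, μ ^ 2 ≤ ψ2 t) ∨ (∀ t ∈ Icc a b, μ ^ 2 ≤ - ψ2 t))
    (hg : ∀ t ∈ Icc a b, HasDerivAt g (g1 t) t) (hg1 : ContinuousOn g1 (Icc a b))
    (hG : ∀ t ∈ Icc a b, |g t| ≤ G) (hG1 : ∀ t ∈ Icc a b, |g1 t| ≤ G1) :
    ‖∫ t in a..b, Complex.exp (Complex.I * ψ t) * g t‖ ≤ (G + G1 * (b - a) / 2 + 2 * Real.pi * G) / μ := by
  rcases hlow with hlow | hlow
  · exact vdc_pos a b hab ψ ψ1 ψ2 g g1 μ G G1 hμ h1 h2 hc hlow hg hg1 hG hG1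
  · have := vdc_pos a b hab (fun t => - ψ t) (fun t => -ψ1 t) (fun t => -ψ2 t) g g1 μ G G1 hμ
      (fun t ht => (h1 t ht).neg) (fun t ht => (h2 t ht).neg) hc.neg hlow hg hg1 hG hG1
    rw [← RCLike.norm_conj, ← intervalIntegral.intervalIntegral_conj]
    convert! this using 4 with t
    simp [← Complex.exp_conj]

end

section
open MeasureTheory Set Filter ENNReal NNReal Topology

lemma gam (γ : ℝ → ℝ) (hγ0 : γ 0 = 0)
    (hsmooth : ContDiffOn ℝ (⊤ : ℕ∞) γ (Set.Icc (-1 : ℝ) 1))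
    (hmono : StrictMonoOn γ (Set.Icc (0 : ℝ) 1))
    (hyp2 : ∃ c > (0 : ℝ), ∀ j ∈ ({1, 2} : Set ℕ), ∀ t ∈ Set.Ioc (0 : ℝ) 1,
      c ≤ |t ^ j * iteratedDeriv j γ t / γ t|)
    (hyp3 : ∃ C : ℝ, ∀ j : ℕ, 1 ≤ j → j ≤ 1000 → ∀ t ∈ Set.Ioc (0 : ℝ) 1,
      |t ^ j * iteratedDeriv j γ t / γ t| ≤ C)
    (hconv : ∀ t ∈ Set.Ioc (0 : ℝ) 1, 0 < iteratedDeriv 2 γ t) :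
    ∃ c0 > (0 : ℝ), ∀ l : ℕ, 2 ≤ l → ∃ d1 d2 : ℝ → ℝ, ContinuousOn d2 (Icc (1 / 2) 2) ∧
      ∀ t ∈ Icc (1 / 2 : ℝ) 2, HasDerivAt (gammaZ γ (l : ℤ)) (d1 t) t ∧ HasDerivAt d1 (d2 t) t ∧ c0 ≤ d2 t := by
  obtain ⟨c, hc, hyp2⟩ := hyp2
  obtain ⟨C, hyp3⟩ := hyp3
  obtain ⟨N, hN⟩ := exists_nat_ge C
  have hs : ContDiffOn ℝ (⊤ : ℕ∞) γ (Ioo (-1 : ℝ) 1) := hsmooth.mono Ioo_subset_Icc_self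
  have hs1 : ContDiffOn ℝ (⊤ : ℕ∞) (deriv γ) (Ioo (-1 : ℝ) 1) := hs.deriv_of_isOpen isOpen_Ioo (by simp)
  have hs2 : ContDiffOn ℝ (⊤ : ℕ∞) (deriv (deriv γ)) (Ioo (-1 : ℝ) 1) := hs1.deriv_of_isOpen isOpen_Ioo (by simp)
  have hd1 : ∀ s ∈ Ioo (-1 : ℝ) 1, HasDerivAt γ (deriv γ s) s := fun s hs' =>
    ((hs.differentiableOn (by simp)).differentiableAt (isOpen_Ioo.mem_nhds hs')).hasDerivAt
  have hd2 : ∀ s ∈ Ioo (-1 : ℝ) 1, HasDerivAt (deriv γ) (deriv (deriv γ) s) s := fun s hs' =>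
    ((hs1.differentiableOn (by simp)).differentiableAt (isOpen_Ioo.mem_nhds hs')).hasDerivAt
  have hpos : ∀ s ∈ Ioc (0 : ℝ) 1, 0 < γ s := by
    intro s hs'
    rw [← hγ0]
    exact hmono ⟨le_rfl, zero_le_one⟩ ⟨hs'.1.le, hs'.2⟩ hs'.1
  -- doubling
  have hdoub : ∀ δ : ℝ, 0 < δ → δ ≤ 1 / 2 → γ δ ≤ 2 ^ N * γ (δ / 2) := by
    intro δ h0 h1
    have anti : AntitoneOn (fun s => γ s / s ^ N) (Icc (δ / 2) δ) := by
      have hder : ∀ s ∈ Icc (δ / 2) δ, HasDerivAt (fun s => γ s / s ^ N)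
          ((deriv γ s * s ^ N - γ s * (N * s ^ (N - 1))) / (s ^ N) ^ 2) s := by
        intro s hs'
        have hs0 : 0 < s := by linarith [hs'.1]
        exact (hd1 s ⟨by linarith, by linarith [hs'.2]⟩).div (hasDerivAt_pow N s) (pow_pos hs0 N).ne'
      apply antitoneOn_of_deriv_nonpos (convex_Icc _ _)
      · exact fun s hs' => (hder s hs').continuousAt.continuousWithinAt
      · exact fun s hs' => (hder s (interior_subset hs')).differentiableAt.differentiableWithinAt
      · intro s hs'
        have hs' := interior_subset hs'
        rw [(hder s hs').deriv]
        have hs0 : 0 < s := by linarith [hs'.1]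
        have hsI : s ∈ Ioc (0 : ℝ) 1 := ⟨hs0, by linarith [hs'.2]⟩
        apply div_nonpos_of_nonpos_of_nonneg _ (by positivity)
        have h3 := (le_abs_self _).trans (hyp3 1 le_rfl (by norm_num) s hsI)
        have hg := hpos s hsI
        rw [iteratedDeriv_one, pow_one, div_le_iff₀ hg] at h3
        have h4 : s * deriv γ s ≤ N * γ s := h3.trans (by gcongr)
        rcases Nat.eq_zero_or_pos N with hN0 | hN0
        · subst hN0
          simp at h4 ⊢
          by_contra hcon
          push Not at hcon
          nlinarith [mul_pos hs0 hcon]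
        · have e : s ^ N = s ^ (N - 1) * s := by
            rw [← pow_succ]; congr 1; omega
          have hp : 0 < s ^ (N - 1) := pow_pos hs0 _
          rw [e]
          nlinarith
    have := anti (left_mem_Icc.2 (by linarith)) (right_mem_Icc.2 (by linarith)) (by linarith : δ / 2 ≤ δ)
    simp only at this
    rw [div_pow, div_le_iff₀ (by positivity)] at this
    refine this.trans (le_of_eq ?_)
    field_simp
  refine ⟨c / 4 / 2 ^ N, by positivity, fun l hl => ?_⟩
  set δ : ℝ := (2 : ℝ) ^ (-(l : ℤ)) with hδ
  have δ0 : 0 < δ := by positivity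
  have δ1 : δ ≤ 1 / 4 := by
    have : (2 : ℝ) ^ (-(l : ℤ)) ≤ 2 ^ (-(2 : ℤ)) := zpow_le_zpow_right₀ (by norm_num) (by omega)
    rw [hδ]; refine this.trans (by norm_num)
  have hγδ : 0 < γ δ := hpos δ ⟨δ0, by linarith⟩
  have hmem : ∀ t ∈ Icc (1 / 2 : ℝ) 2, δ * t ∈ Ioc (0 : ℝ) (1 / 2) := by
    intro t ht
    constructor
    · have := ht.1; positivity
    · nlinarith [ht.1, ht.2]
  refine ⟨fun t => deriv γ (δ * t) * δ / γ δ, fun t => deriv (deriv γ) (δ * t) * δ * δ / γ δ, ?_, ?_⟩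
  · have : ContinuousOn (fun t => deriv (deriv γ) (δ * t)) (Icc (1 / 2) 2) := by
      apply hs2.continuousOn.comp (by fun_prop)
      intro t ht
      have := hmem t ht
      exact ⟨by linarith [this.1], by linarith [this.2]⟩
    fun_prop
  · intro t ht
    have hm := hmem t ht
    have hI : δ * t ∈ Ioo (-1 : ℝ) 1 := ⟨by linarith [hm.1], by linarith [hm.2]⟩
    have hJ : δ * t ∈ Ioc (0 : ℝ) 1 := ⟨hm.1, by linarith [hm.2]⟩
    have hlin : HasDerivAt (fun t => δ * t) δ t := by simpa using (hasDerivAt_id t).const_mul δ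
    refine ⟨?_, ?_, ?_⟩
    · exact ((hd1 _ hI).comp t hlin).div_const _
    · exact (((hd2 _ hI).comp t hlin).mul_const δ).div_const _
    · have h2 := hyp2 2 (by simp) _ hJ
      have h3 := hconv _ hJ
      have hg := hpos _ hJ
      rw [abs_of_pos (by have := hm.1; positivity), le_div_iff₀ hg] at h2
      rw [iteratedDeriv_succ, iteratedDeriv_one] at h2
      have h4 : γ (δ / 2) ≤ γ (δ * t) := hmono.monotoneOn ⟨by positivity, by linarith⟩ ⟨hJ.1.le, hJ.2⟩ (by nlinarith [ht.1])
      have h5 := hdoub δ δ0 (by linarith)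
      rw [div_div, div_le_div_iff₀ (by positivity) hγδ]
      have h6 : 0 < deriv (deriv γ) (δ * t) := by
        have := h3; rwa [iteratedDeriv_succ, iteratedDeriv_one] at this
      have ht2 : t ^ 2 ≤ 4 := by nlinarith [ht.1, ht.2]
      calc c * γ δ ≤ c * (2 ^ N * γ (δ * t)) := by
            gcongr; exact h5.trans (by gcongr)
        _ = 2 ^ N * (c * γ (δ * t)) := by ring
        _ ≤ 2 ^ N * ((δ * t) ^ 2 * deriv (deriv γ) (δ * t)) := by gcongr
        _ = (deriv (deriv γ) (δ * t) * δ * δ * 2 ^ N) * t ^ 2 := by ring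
        _ ≤ (deriv (deriv γ) (δ * t) * δ * δ * 2 ^ N) * 4 := by gcongr
        _ = _ := by ring

lemma G_smooth (φ : ℝ → ℝ) (hφs : ContDiff ℝ (⊤ : ℕ∞) φ)
    (hφsupp : Function.support φ ⊆ {t : ℝ | 1/2 ≤ |t| ∧ |t| ≤ 2}) :
    ContDiff ℝ 1 (fun t => φ t / t) := by
  rw [contDiff_iff_contDiffAt]
  intro t
  by_cases ht : t = 0
  · subst ht
    have : (fun t => φ t / t) =ᶠ[𝓝 0] fun _ => 0 := by
      have : Metric.ball (0 : ℝ) (1 / 2) ∈ 𝓝 (0 : ℝ) := Metric.ball_mem_nhds _ (by norm_num)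
      filter_upwards [this] with s hs
      have : φ s = 0 := by
        by_contra h
        have := (hφsupp h).1
        simp at hs
        linarith
      simp [this]
    exact contDiffAt_const.congr_of_eventuallyEq this
  · exact ((hφs.of_le (by simp)).contDiffAt).div contDiffAt_id ht

lemma gammaZ_cont (γ : ℝ → ℝ) (hparity : (∀ t, γ (-t) = γ t) ∨ (∀ t, γ (-t) = -γ t))
    (hcont : ContinuousOn γ (Set.Ici (0 : ℝ))) (l : ℤ) : Continuous (gammaZ γ l) := by
  have hc : Continuous γ := by
    have h2 : ContinuousOn γ (Iic 0) := by
      have h3 : ContinuousOn (fun t => γ (-t)) (Iic 0) :=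
        hcont.comp (by fun_prop) (fun t ht => by simpa using ht)
      rcases hparity with h | h
      · simpa only [h] using h3
      · have h4 : (fun t => γ (-t)) = fun t => -γ t := funext h
        rw [h4] at h3
        have h5 : γ = -(fun t => -γ t) := by ext t; simp
        rw [h5]
        exact h3.neg
    rw [← continuousOn_univ, ← Iic_union_Ici (a := (0 : ℝ))]
    exact h2.union_of_isClosed hcont isClosed_Iic isClosed_Ici
  unfold gammaZ
  fun_prop

lemma Phi_half (γ : ℝ → ℝ) (l : ℕ) (c0 : ℝ) (hc0 : 0 < c0) (d1 d2 : ℝ → ℝ)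
    (hd2 : ContinuousOn d2 (Icc (1 / 2) 2))
    (hd : ∀ t ∈ Icc (1 / 2 : ℝ) 2, HasDerivAt (gammaZ γ (l : ℤ)) (d1 t) t ∧ HasDerivAt d1 (d2 t) t ∧ c0 ≤ d2 t)
    (G : ℝ → ℝ) (hG : ContDiff ℝ 1 G) (hGz : ∀ t, 2 < t → G t = 0) (hGz' : ∀ t, |t| < 1 / 2 → G t = 0)
    (K : ℝ) (hK : ∀ t, |G t| ≤ K) (hK' : ∀ t, |deriv G t| ≤ K) (α β b : ℝ) (hb : 0 < b) (hβ : b ≤ |β|) :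
    ‖∫ t in Ioi (0 : ℝ), Complex.exp (Complex.I * (α * t + β * gammaZ γ (l : ℤ) t)) * G t‖ ≤ (20 * K) / √(b * c0) := by
  have e : ∫ t in Ioi (0 : ℝ), Complex.exp (Complex.I * (α * t + β * gammaZ γ (l : ℤ) t)) * G t =
      ∫ t in (1 / 2 : ℝ)..2, Complex.exp (Complex.I * ((α * t + β * gammaZ γ (l : ℤ) t : ℝ))) * G t := by
    rw [intervalIntegral.integral_of_le (by norm_num)]
    push_cast
    apply setIntegral_eq_of_subset_of_ae_sdiff_eq_zero measurableSet_Ioi.nullMeasurableSet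
    · exact fun t ht => lt_trans (by norm_num) ht.1
    · have h12 : ∀ᵐ t : ℝ, t ≠ 1 / 2 := by
        simp [ae_iff]
      filter_upwards [h12] with t h12 ht
      have : G t = 0 := by
        by_cases h : 2 < t
        · exact hGz t h
        · apply hGz'
          have h0 : 0 < t := ht.1
          rw [abs_of_pos h0]
          by_contra hcon
          exact ht.2 ⟨lt_of_le_of_ne (not_lt.1 hcon) (Ne.symm h12), not_lt.1 h⟩
      rw [this]; simp
  rw [e]
  have hK0 : 0 ≤ K := (abs_nonneg _).trans (hK 0)
  have hlow : (∀ t ∈ Icc (1 / 2 : ℝ) 2, √(b * c0) ^ 2 ≤ β * d2 t) ∨ (∀ t ∈ Icc (1 / 2 : ℝ) 2, √(b * c0) ^ 2 ≤ -(β * d2 t)) := by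
    rw [Real.sq_sqrt (by positivity)]
    rcases abs_cases β with ⟨h, h'⟩ | ⟨h, h'⟩
    · left; intro t ht
      have := (hd t ht).2.2
      rw [h] at hβ
      gcongr
    · right; intro t ht
      have := (hd t ht).2.2
      rw [h] at hβ
      rw [← neg_mul]
      gcongr
      linarith
  have := vdc (1 / 2) 2 (by norm_num) (fun t => α * t + β * gammaZ γ (l : ℤ) t) (fun t => α + β * d1 t)
    (fun t => β * d2 t) G (deriv G) (√(b * c0)) K K (by positivity)
    (fun t ht => by
      have h1 : HasDerivAt (fun t => α * t) α t := by simpa using (hasDerivAt_id t).const_mul α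
      exact h1.add ((hd t ht).1.const_mul β))
    (fun t ht => by simpa using ((hd t ht).2.1.const_mul β).const_add α)
    (by fun_prop) hlow (fun t _ => (hG.differentiable (by simp)).differentiableAt.hasDerivAt)
    (hG.continuous_deriv (by simp)).continuousOn (fun t _ => hK t) (fun t _ => hK' t)
  refine this.trans ?_
  gcongr
  nlinarith [Real.pi_lt_four]

end

section
open MeasureTheory Set Filter ENNReal NNReal Topology

lemma Phi_full (γ : ℝ → ℝ) (hparity : (∀ t, γ (-t) = γ t) ∨ (∀ t, γ (-t) = -γ t))
    (hcont : ContinuousOn γ (Set.Ici (0 : ℝ))) (l : ℕ) (c0 : ℝ) (hc0 : 0 < c0) (d1 d2 : ℝ → ℝ)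
    (hd2 : ContinuousOn d2 (Icc (1 / 2) 2))
    (hd : ∀ t ∈ Icc (1 / 2 : ℝ) 2, HasDerivAt (gammaZ γ (l : ℤ)) (d1 t) t ∧ HasDerivAt d1 (d2 t) t ∧ c0 ≤ d2 t)
    (G : ℝ → ℝ) (hG : ContDiff ℝ 1 G) (hGc : HasCompactSupport G)
    (hGz : ∀ t, 2 < |t| → G t = 0) (hGz' : ∀ t, |t| < 1 / 2 → G t = 0)
    (K : ℝ) (hK : ∀ t, |G t| ≤ K) (hK' : ∀ t, |deriv G t| ≤ K) (u : ℝ) (hu : 1 ≤ u) (ξ : ℝ × ℝ)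
    (b : ℝ) (hb : 0 < b) (hβ : b ≤ |ξ.2|) :
    ‖PhiI (fun t => (G t : ℂ)) (fun t => u * gammaZ γ (l : ℤ) t) ξ‖ ≤ (40 * K) / √(b * c0) := by
  have hgc := gammaZ_cont γ hparity hcont (l : ℤ)
  have hbu : b ≤ |ξ.2 * u| := by
    rw [abs_mul, abs_of_pos (by linarith : 0 < u)]
    nlinarith [abs_nonneg ξ.2]
  have hint : Integrable (fun t : ℝ => Complex.exp (Complex.I * (ξ.1 * t + ξ.2 * ((u * gammaZ γ (l : ℤ) t : ℝ) : ℂ))) * (G t : ℂ)) := by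
    apply Continuous.integrable_of_hasCompactSupport
    · have := hG.continuous
      fun_prop
    · apply HasCompactSupport.mul_left
      exact hGc.comp_left (g := fun x : ℝ => (x : ℂ)) (by simp)
  have P := Phi_half γ l c0 hc0 d1 d2 hd2 hd G hG (fun t ht => hGz t (ht.trans_le (le_abs_self t))) hGz' K hK hK'
    ξ.1 (ξ.2 * u) b hb hbu
  have hGn : ContDiff ℝ 1 (fun t => G (-t)) := hG.comp contDiff_neg
  have Q : ‖∫ t in Ioi (0 : ℝ), Complex.exp (Complex.I * (ξ.1 * ((-t : ℝ) : ℂ) + ξ.2 * ((u * gammaZ γ (l : ℤ) (-t) : ℝ) : ℂ))) * (G (-t) : ℂ)‖ ≤ (20 * K) / √(b * c0) := by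
    have Q1 := fun β hβ => Phi_half γ l c0 hc0 d1 d2 hd2 hd (fun t => G (-t)) hGn
      (fun t ht => hGz (-t) (by rw [abs_neg]; exact ht.trans_le (le_abs_self t))) (fun t ht => hGz' (-t) (by rwa [abs_neg])) K
      (fun t => hK (-t)) (fun t => by rw [deriv_comp_neg, abs_neg]; exact hK' (-t))
      (-ξ.1) β b hb hβ
    rcases hparity with h | h
    · have e : ∀ t, gammaZ γ (l : ℤ) (-t) = gammaZ γ (l : ℤ) t := fun t => by
        unfold gammaZ; rw [mul_neg, h]
      have := Q1 (ξ.2 * u) hbu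
      simp only [e]
      convert! this using 6
      push_cast; ring
    · have e : ∀ t, gammaZ γ (l : ℤ) (-t) = -gammaZ γ (l : ℤ) t := fun t => by
        unfold gammaZ; rw [mul_neg, h, neg_div]
      have := Q1 (-(ξ.2 * u)) (by rwa [abs_neg])
      simp only [e]
      convert! this using 6
      push_cast; ring
  unfold PhiI
  rw [← intervalIntegral.integral_Iic_add_Ioi (b := 0) hint.integrableOn hint.integrableOn]
  have e2 := integral_comp_neg_Ioi (0 : ℝ) (fun t : ℝ => Complex.exp (Complex.I * (ξ.1 * t + ξ.2 * ((u * gammaZ γ (l : ℤ) t : ℝ) : ℂ))) * (G t : ℂ))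
  rw [neg_zero] at e2
  rw [← e2]
  have e3 : (40 * K) / √(b * c0) = (20 * K) / √(b * c0) + (20 * K) / √(b * c0) := by ring
  rw [e3]
  refine (norm_add_le _ _).trans (add_le_add Q ?_)
  convert! P using 6
  push_cast; ring

lemma mjl_eq (γ φ : ℝ → ℝ) (j l : ℕ) (u : ℝ) :
    mjl γ φ j l u = fun ξ => ((φ ((2 : ℝ) ^ (-(j : ℤ)) * ξ.1) * φ ((2 : ℝ) ^ (-(j : ℤ)) * ξ.2) : ℝ) : ℂ) *
      PhiI (fun t => ((φ t / t : ℝ) : ℂ)) (fun t => u * gammaZ γ (l : ℤ) t) ξ := by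
  funext ξ
  unfold mjl PhiI
  congr 2
  funext t
  rw [← Complex.exp_add]
  push_cast
  rw [mul_div_assoc]
  congr 2
  ring

lemma cut_cs (φ : ℝ → ℝ) (hφsupp : Function.support φ ⊆ {t : ℝ | 1/2 ≤ |t| ∧ |t| ≤ 2}) (c : ℝ) (hc : 0 < c) :
    HasCompactSupport (fun ξ : ℝ × ℝ => ((φ (c * ξ.1) * φ (c * ξ.2) : ℝ) : ℂ)) := by
  apply HasCompactSupport.intro (K := Icc (-(2 / c)) (2 / c) ×ˢ Icc (-(2 / c)) (2 / c)) (isCompact_Icc.prod isCompact_Icc)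
  intro ξ hξ
  by_contra hne
  apply hξ
  have hh : ∀ s, φ (c * s) ≠ 0 → s ∈ Icc (-(2 / c)) (2 / c) := by
    intro s hs
    have := (hφsupp hs).2
    rw [abs_mul, abs_of_pos hc, ← le_div_iff₀' hc] at this
    exact abs_le.1 this
  constructor
  · apply hh; intro h; simp [h] at hne
  · apply hh; intro h; simp [h] at hne

lemma core (γ : ℝ → ℝ) (hγ0 : γ 0 = 0)
    (hsmooth : ContDiffOn ℝ (⊤ : ℕ∞) γ (Set.Icc (-1 : ℝ) 1))
    (hparity : (∀ t, γ (-t) = γ t) ∨ (∀ t, γ (-t) = -γ t))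
    (hmono : StrictMonoOn γ (Set.Icc (0 : ℝ) 1))
    (hyp2 : ∃ c > (0 : ℝ), ∀ j ∈ ({1, 2} : Set ℕ), ∀ t ∈ Set.Ioc (0 : ℝ) 1,
      c ≤ |t ^ j * iteratedDeriv j γ t / γ t|)
    (hyp3 : ∃ C : ℝ, ∀ j : ℕ, 1 ≤ j → j ≤ 1000 → ∀ t ∈ Set.Ioc (0 : ℝ) 1,
      |t ^ j * iteratedDeriv j γ t / γ t| ≤ C)
    (hconv : ∀ t ∈ Set.Ioc (0 : ℝ) 1, 0 < iteratedDeriv 2 γ t)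
    (hcont : ContinuousOn γ (Set.Ici (0 : ℝ)))
    (φ : ℝ → ℝ) (hφs : ContDiff ℝ (⊤ : ℕ∞) φ) (hφc : HasCompactSupport φ)
    (hφsupp : Function.support φ ⊆ {t : ℝ | 1/2 ≤ |t| ∧ |t| ≤ 2}) :
    ∃ C1 > (0 : ℝ), ∃ B > (0 : ℝ), ∀ j : ℕ, ∀ l : ℕ, 2 ≤ l → ∀ u ∈ Set.Icc (1 : ℝ) 2,
      ContDiff ℝ (⊤ : ℕ∞) (mjl γ φ j l u) ∧ HasCompactSupport (mjl γ φ j l u) ∧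
      (∀ ξ, ‖mjl γ φ j l u ξ‖ ≤ C1 * √((2 : ℝ) ^ (-(j : ℤ)))) ∧
      ∀ (f : SchwartzMap (ℝ × ℝ) ℂ) (M : ℝ), (∀ᵐ z, ‖f z‖ ≤ M) → ∀ x, ‖op (mjl γ φ j l u) f x‖ ≤ B * M := by
  obtain ⟨c0, hc0, hgam⟩ := gam γ hγ0 hsmooth hmono hyp2 hyp3 hconv
  set G : ℝ → ℝ := fun t => φ t / t with hGdef
  have hG : ContDiff ℝ 1 G := G_smooth φ hφs hφsupp
  have hGz : ∀ t, 2 < |t| → G t = 0 := fun t ht => by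
    have : φ t = 0 := by
      by_contra h
      linarith [(hφsupp h).2]
    simp [hGdef, this]
  have hGz' : ∀ t, |t| < 1 / 2 → G t = 0 := fun t ht => by
    have : φ t = 0 := by
      by_contra h
      linarith [(hφsupp h).1]
    simp [hGdef, this]
  have hGc : HasCompactSupport G := by
    apply HasCompactSupport.intro (K := Icc (-2) 2) isCompact_Icc
    intro t ht
    apply hGz
    by_contra h
    exact ht (abs_le.1 (not_lt.1 h))
  obtain ⟨K1, hK1⟩ := hG.continuous.bounded_above_of_compact_support hGc
  obtain ⟨K2, hK2⟩ := (hG.continuous_deriv (by simp)).bounded_above_of_compact_support hGc.deriv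
  obtain ⟨F, hF⟩ := hφs.continuous.bounded_above_of_compact_support hφc
  set K := max K1 K2 with hKdef
  have hK : ∀ t, |G t| ≤ K := fun t => (hK1 t).trans (le_max_left _ _)
  have hK' : ∀ t, |deriv G t| ≤ K := fun t => (hK2 t).trans (le_max_right _ _)
  have hK0 : 0 ≤ K := (abs_nonneg _).trans (hK 0)
  have hF0 : 0 ≤ F := (norm_nonneg _).trans (hF 0)
  have hGi0 : 0 ≤ ∫ t, ‖((G t : ℝ) : ℂ)‖ := integral_nonneg (fun t => norm_nonneg _)
  refine ⟨F ^ 2 * (40 * K * (√(2 / c0))) + 1, by positivity, (∫ t, ‖((G t : ℝ) : ℂ)‖) * kN φ ^ 2 + 1, by positivity, ?_⟩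
  intro j l hl u hu
  obtain ⟨d1, d2, hd2, hd⟩ := hgam l hl
  have hθ : Continuous (fun t => u * gammaZ γ (l : ℤ) t) := (gammaZ_cont γ hparity hcont l).const_mul u
  have hgcont : Continuous (fun t => ((G t : ℝ) : ℂ)) := Complex.continuous_ofReal.comp hG.continuous
  have hgcs : HasCompactSupport (fun t => ((G t : ℝ) : ℂ)) := hGc.comp_left (g := fun x : ℝ => (x : ℂ)) (by simp)
  have hcpos : (0 : ℝ) < (2 : ℝ) ^ (-(j : ℤ)) := by positivity
  set c : ℝ := (2 : ℝ) ^ (-(j : ℤ)) with hcdef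
  have hcs := cut_cs φ hφsupp c hcpos
  have hmj := mjl_eq γ φ j l u
  rw [hmj]
  refine ⟨?_, ?_, ?_, ?_⟩
  · apply ContDiff.mul
    · have hr : ContDiff ℝ (⊤ : ℕ∞) (fun ξ : ℝ × ℝ => φ (c * ξ.1) * φ (c * ξ.2)) := by fun_prop
      exact Complex.ofRealCLM.contDiff.comp hr
    · exact Phi_smooth _ _ hgcont hgcs hθ
  · exact hcs.mul_right
  · intro ξ
    by_cases h : φ (c * ξ.2) = 0
    · simp only [← hcdef, h]
      simp; positivity
    · have h1 := (hφsupp h).1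
      rw [abs_mul, abs_of_pos hcpos] at h1
      have hb : 1 / (2 * c) ≤ |ξ.2| := by
        rw [div_le_iff₀ (by positivity)]; linarith
      have := Phi_full γ hparity hcont l c0 hc0 d1 d2 hd2 hd G hG hGc hGz hGz' K hK hK' u hu.1 ξ (1 / (2 * c)) (by positivity) hb
      have e : (40 * K) / √(1 / (2 * c) * c0) = (40 * K * √(2 / c0)) * √c := by
        have : 1 / (2 * c) * c0 = ((2 / c0) * c)⁻¹ := by field_simp
        rw [this, Real.sqrt_inv, div_inv_eq_mul, Real.sqrt_mul (by positivity)]; ring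
      rw [e] at this
      rw [norm_mul, Complex.norm_real, norm_mul]
      calc _ ≤ (F * F) * ((40 * K * √(2 / c0)) * √c) := by
            gcongr
            · exact hF _
            · exact hF _
        _ = F ^ 2 * (40 * K * √(2 / c0)) * √c := by ring
        _ ≤ _ := by gcongr; linarith
  · intro f M hM x
    have hM0 : 0 ≤ M := by
      obtain ⟨z, hz⟩ := hM.exists
      exact (norm_nonneg _).trans hz
    refine (op_Linf φ hφs hφc c hcpos hcs _ _ hgcont hgcs hθ f M hM x).trans ?_
    gcongr
    linarith

end

section
open MeasureTheory Set Filter ENNReal NNReal Topology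

lemma lint_eq (F : ℝ × ℝ → ℂ) (p : ℝ≥0∞) (h0 : p ≠ 0) (ht : p ≠ ∞) :
    eLpNorm F p volume = (∫⁻ x, ENNReal.ofReal (‖F x‖ ^ p.toReal)) ^ (1 / p.toReal) := by
  rw [eLpNorm_eq_lintegral_rpow_enorm_toReal h0 ht]
  congr 2
  funext x
  rw [← ENNReal.ofReal_rpow_of_nonneg (norm_nonneg _) ENNReal.toReal_nonneg, ofReal_norm]

lemma fin_case
    (a : ℝ × ℝ → ℂ) (ha : ContDiff ℝ (⊤ : ℕ∞) a) (hc : HasCompactSupport a)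
    (C1 B : ℝ) (hC1 : 0 < C1) (hB : 0 < B) (j : ℕ)
    (h2 : ∀ ξ, ‖a ξ‖ ≤ C1 * √((2 : ℝ) ^ (-(j : ℤ))))
    (hinf : ∀ (f : SchwartzMap (ℝ × ℝ) ℂ) (M : ℝ), (∀ᵐ z, ‖f z‖ ≤ M) → ∀ x, ‖op a f x‖ ≤ B * M)
    (p : ℝ≥0∞) (hp : 2 < p) (hpt : p ≠ ∞) (f : SchwartzMap (ℝ × ℝ) ℂ) :
    eLpNorm (op a f) p volume ≤ ENNReal.ofReal
      ((4 * p.toReal / (p.toReal - 2) * C1 ^ 2 * (4 * B) ^ (p.toReal - 2)) ^ (1 / p.toReal) *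
        (2 : ℝ) ^ (-((j : ℝ) / p.toReal))) * eLpNorm f p volume := by
  have hp2 : 2 < p.toReal := by
    have := (ENNReal.toReal_lt_toReal (by simp) hpt).2 hp
    simpa using this
  have hp0 : p ≠ 0 := by rintro rfl; simp at hp
  have hq : 0 < p.toReal - 2 := by linarith
  have hpp : 0 < p.toReal := by linarith
  have := marc (fun f => op a f) (fun f g x => op_add a ha hc f g x) (fun f => op_cont a ha hc f)
    (C1 * √((2 : ℝ) ^ (-(j : ℤ)))) B (by positivity) hB (fun f => op_L2 a ha hc _ h2 f) hinf p.toReal hp2 f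
  rw [lint_eq _ p hp0 hpt, lint_eq _ p hp0 hpt]
  refine (ENNReal.rpow_le_rpow this (by positivity)).trans ?_
  rw [ENNReal.mul_rpow_of_nonneg _ _ (by positivity), ENNReal.ofReal_rpow_of_nonneg (by positivity) (by positivity)]
  apply le_of_eq
  congr 2
  have e : 4 * p.toReal / (p.toReal - 2) * (C1 * √((2 : ℝ) ^ (-(j : ℤ)))) ^ 2 * (4 * B) ^ (p.toReal - 2) =
    (4 * p.toReal / (p.toReal - 2) * C1 ^ 2 * (4 * B) ^ (p.toReal - 2)) * (2 : ℝ) ^ (-(j : ℤ)) := by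
    rw [mul_pow, Real.sq_sqrt (by positivity)]; ring
  rw [e, Real.mul_rpow (by positivity) (by positivity)]
  congr 1
  rw [← Real.rpow_intCast, ← Real.rpow_mul (by norm_num)]
  congr 1
  push_cast
  ring

lemma inf_case (a : ℝ × ℝ → ℂ) (B : ℝ) (hB : 0 < B)
    (hinf : ∀ (f : SchwartzMap (ℝ × ℝ) ℂ) (M : ℝ), (∀ᵐ z, ‖f z‖ ≤ M) → ∀ x, ‖op a f x‖ ≤ B * M)
    (f : SchwartzMap (ℝ × ℝ) ℂ) :
    eLpNorm (op a f) ∞ volume ≤ ENNReal.ofReal B * eLpNorm f ∞ volume := by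
  have hf : eLpNorm f ∞ volume ≠ ∞ := (f.memLp ∞ volume).2.ne
  have hM : ∀ᵐ z, ‖f z‖ ≤ (eLpNorm f ∞ volume).toReal := by
    have := ae_le_eLpNormEssSup (f := f) (μ := (volume : Measure (ℝ × ℝ)))
    filter_upwards [this] with z hz
    rw [← toReal_enorm]
    exact ENNReal.toReal_mono hf (by simpa using hz)
  have := hinf f _ hM
  have h3 := eLpNormEssSup_le_of_ae_bound (μ := (volume : Measure (ℝ × ℝ))) (Eventually.of_forall this)
  rw [eLpNorm_exponent_top]
  refine h3.trans ?_
  rw [ENNReal.ofReal_mul hB.le, ENNReal.ofReal_toReal hf]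


end

/-- Fixed-`u` `L^p` bound for `m_j^l(u,D)`, uniform in `l` and `u`. -/
theorem mjl_fixed_u_bound
    (γ : ℝ → ℝ)
    (hγ0 : γ 0 = 0)
    (hsmooth : ContDiffOn ℝ (⊤ : ℕ∞) γ (Set.Icc (-1 : ℝ) 1))
    (hparity : (∀ t, γ (-t) = γ t) ∨ (∀ t, γ (-t) = -γ t))
    (hmono : StrictMonoOn γ (Set.Icc (0 : ℝ) 1))
    (hyp1 : ∃ c > (0 : ℝ), ∀ t ∈ Set.Ioc (0 : ℝ) 1,
      c ≤ |deriv (fun s => deriv γ s / deriv (deriv γ) s) t|)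
    (hyp2 : ∃ c > (0 : ℝ), ∀ j ∈ ({1, 2} : Set ℕ), ∀ t ∈ Set.Ioc (0 : ℝ) 1,
      c ≤ |t ^ j * iteratedDeriv j γ t / γ t|)
    (hyp3 : ∃ C : ℝ, ∀ j : ℕ, 1 ≤ j → j ≤ 1000 → ∀ t ∈ Set.Ioc (0 : ℝ) 1,
      |t ^ j * iteratedDeriv j γ t / γ t| ≤ C)
    (hγ1 : γ 1 = 1)
    (hconv : ∀ t ∈ Set.Ioc (0 : ℝ) 1, 0 < iteratedDeriv 2 γ t)
    (hext : ∀ t : ℝ, 1 ≤ t → γ t = (γ t⁻¹)⁻¹)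
    (hcont : ContinuousOn γ (Set.Ici (0 : ℝ)))
    (hmono2 : StrictMonoOn γ (Set.Ici (0 : ℝ)))
    (hsurj : γ '' Set.Ici (0 : ℝ) = Set.Ici (0 : ℝ))
    (φ : ℝ → ℝ) (hφs : ContDiff ℝ (⊤ : ℕ∞) φ) (hφc : HasCompactSupport φ)
    (hφsupp : Function.support φ ⊆ {t : ℝ | 1/2 ≤ |t| ∧ |t| ≤ 2})
    (hφsum : ∀ t : ℝ, t ≠ 0 → HasSum (fun k : ℤ => φ ((2 : ℝ) ^ (-k) * t)) 1)
    (p : ℝ≥0∞) (hp : 2 ≤ p) :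
    ∃ C : ℝ, 0 < C ∧ ∃ L₀ : ℕ,
      ∀ j : ℕ, 1 ≤ j → ∀ l : ℕ, L₀ ≤ l → ∀ u ∈ Set.Icc (1 : ℝ) 2,
      ∀ f : SchwartzMap (ℝ × ℝ) ℂ,
        eLpNorm (op (mjl γ φ j l u) (⇑f)) p volume ≤
          ENNReal.ofReal (C * (2 : ℝ) ^ (-((j : ℝ) / p.toReal))) *
            eLpNorm (⇑f) p volume := by
  obtain ⟨C1, hC1, B, hB, h⟩ := core γ hγ0 hsmooth hparity hmono hyp2 hyp3 hconv hcont φ hφs hφc hφsupp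
  by_cases hpt : p = ∞
  · subst hpt
    refine ⟨B, hB, 2, fun j _ l hl u hu f => ?_⟩
    obtain ⟨ha, hc, h2, hinf⟩ := h j l hl u hu
    simpa using inf_case _ B hB hinf f
  rcases hp.eq_or_lt with h2p | h2p
  · subst h2p
    refine ⟨C1, hC1, 2, fun j _ l hl u hu f => ?_⟩
    obtain ⟨ha, hc, h2, hinf⟩ := h j l hl u hu
    refine (op_L2 _ ha hc _ h2 f).trans (le_of_eq ?_)
    congr 3
    rw [Real.sqrt_eq_rpow, ← Real.rpow_intCast, ← Real.rpow_mul (by norm_num)]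
    congr 1
    simp
    ring
  · have hp2 : 2 < p.toReal := by
      have := (ENNReal.toReal_lt_toReal (by simp) hpt).2 h2p
      simpa using this
    have hq : 0 < p.toReal - 2 := by linarith
    refine ⟨(4 * p.toReal / (p.toReal - 2) * C1 ^ 2 * (4 * B) ^ (p.toReal - 2)) ^ (1 / p.toReal),
      by positivity, 2, fun j _ l hl u hu f => ?_⟩
    obtain ⟨ha, hc, h2, hinf⟩ := h j l hl u hu
    exact fin_case _ ha hc C1 B hC1 hB j h2 hinf p h2p hpt f
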